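/- (Tracking error recursion) For every block index i ≥ 1 and every k in the block 𝓘_i = {iτ, …, (i+1)τ−1}, the tracking disagreement satisfies ‖𝒯^k‖ ≤ ε_τ ‖𝒯^{(i−1)τ}‖ + β₁ Σ_{j=(i−1)τ}^{k−1} ‖𝒞^j‖ + β₂ Σ_{j=(i−1)τ}^{k−1} ‖𝒯^j‖ + β₃ Σ_{j=(i−1)τ}^{k−1} ‖s^j‖, where β₁ = L c_W + μ L², β₂ = μ L, β₃ = μ √R L², and c_W = sup_j ‖(W^{(j mod τ)} − I_R) ⊗ I_d ∘ J⊥‖ ≤ 2 (the operator norm of (𝒲^j − I) restricted to the range of J⊥). -/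

import Mathlib

open scoped BigOperators RealInnerProductSpace

/-!
Let `Δ^j = ∇𝓕^{j+1} − ∇𝓕^j`. Projecting the tracking update gives
`𝒯^{j+1} = 𝒲^j 𝒯^j + J⊥ Δ^j`, because a doubly stochastic mixing commutes with `J⊥`.

*Size of the increment* (`delta_bound` inside the proof).
By Lipschitz gradients `‖Δ^j‖ ≤ L ‖Z^{j+1} − Z^j‖`, and
`Z^{j+1} − Z^j = (𝒲^j − I) 𝒞^j − μ (𝒲^j 𝒯^j + J G^j)`. Gradient tracking preserves the sum of the
`g_r`, so `J G^j = J ∇𝓕^j`, and optimality of `z*` rewrites this as the average of `H_r c_r^j` plus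
the constant vector `H s^j`. Since `𝒲^j` and `J` are nonexpansive (`norm_mix_le`),
`‖Δ^j‖ ≤ β₁ ‖𝒞^j‖ + β₂ ‖𝒯^j‖ + β₃ ‖s^j‖`.

*Accumulation.* Over the first block, starting at `a = (i−1)τ`, induction gives
`‖𝒯^{a+l} − P_l 𝒯^a‖ ≤ Σ_{a ≤ j < a+l} ‖Δ^j‖`, where `P_l` is the product of the first `l` mixing
matrices. As `𝒯^a` has zero average, `P_τ 𝒯^a = (P_τ − 𝟙𝟙ᵀ/R) 𝒯^a` has norm at most `ε ‖𝒯^a‖`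
(`norm_mix_le_opNorm`). From `iτ` on, each further step adds at most `‖Δ^j‖`.
-/

/-- Stacked vectors of `R` agents in dimension `d`, with the Euclidean norm. -/
abbrev Stack (R d : ℕ) := PiLp 2 fun _ : Fin R => EuclideanSpace ℝ (Fin d)

/-- The action of `A ⊗ I_d` on a stacked vector. -/
noncomputable def mix {R d : ℕ} (A : Matrix (Fin R) (Fin R) ℝ) (V : Stack R d) : Stack R d :=
  WithLp.toLp 2 fun r => ∑ q, A r q • V q

/-- The averaging matrix `𝟙𝟙ᵀ/R`. -/
noncomputable def avgMat (R : ℕ) : Matrix (Fin R) (Fin R) ℝ :=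
  Matrix.of fun _ _ : Fin R => (R : ℝ)⁻¹

section Mix

variable {R d : ℕ}

lemma mix_apply (A : Matrix (Fin R) (Fin R) ℝ) (V : Stack R d) (r : Fin R) :
    mix A V r = ∑ q, A r q • V q := rfl

lemma mix_sub (A : Matrix (Fin R) (Fin R) ℝ) (V U : Stack R d) :
    mix A (V - U) = mix A V - mix A U := by
  ext1 r
  simp [mix_apply, smul_sub]

lemma mix_sub_mat (A B : Matrix (Fin R) (Fin R) ℝ) (V : Stack R d) :
    mix (A - B) V = mix A V - mix B V := by
  ext1 r
  simp [mix_apply, sub_smul]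

lemma mix_one (V : Stack R d) : mix 1 V = V := by
  ext1 r
  simp [mix_apply, Matrix.one_apply]

lemma mix_mul (A B : Matrix (Fin R) (Fin R) ℝ) (V : Stack R d) :
    mix (A * B) V = mix A (mix B V) := by
  ext1 r
  simp only [mix_apply, Matrix.mul_apply, Finset.sum_smul, Finset.smul_sum, mul_smul]
  exact Finset.sum_comm

lemma mix_avg_apply (V : Stack R d) (r : Fin R) :
    mix (avgMat R) V r = (R : ℝ)⁻¹ • ∑ q, V q := by
  simp [mix_apply, avgMat, Finset.smul_sum]

/-- `‖A ⊗ I_d‖ ≤ ‖A‖`: the matrix acts separately on each of the `d` coordinate slices. -/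
lemma norm_mix_le_opNorm (A : Matrix (Fin R) (Fin R) ℝ) (V : Stack R d) :
    ‖mix A V‖ ≤ ‖Matrix.toEuclideanCLM (𝕜 := ℝ) A‖ * ‖V‖ := by
  have slice : ∀ U : Stack R d,
      ‖U‖ ^ 2 = ∑ c, ‖(WithLp.toLp 2 fun r => U r c : EuclideanSpace ℝ (Fin R))‖ ^ 2 := by
    intro U
    simp only [PiLp.norm_sq_eq_of_L2]
    exact Finset.sum_comm
  refine (sq_le_sq₀ (norm_nonneg _) (by positivity)).1 ?_
  rw [mul_pow, slice, slice V, Finset.mul_sum]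
  refine Finset.sum_le_sum fun c _ => ?_
  rw [← mul_pow]
  refine pow_le_pow_left₀ (norm_nonneg _) ?_ 2
  refine le_trans (le_of_eq ?_) ((Matrix.toEuclideanCLM (𝕜 := ℝ) A).le_opNorm _)
  congr 1
  ext r
  simp [mix_apply, Matrix.mulVec, dotProduct]

/-- Doubly stochastic mixing is nonexpansive, by convexity of the square in every row. -/
lemma norm_mix_le (A : Matrix (Fin R) (Fin R) ℝ) (hA : ∀ r q, 0 ≤ A r q)
    (hrow : ∀ r, ∑ q, A r q = 1) (hcol : ∀ q, ∑ r, A r q = 1) (V : Stack R d) :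
    ‖mix A V‖ ≤ ‖V‖ := by
  refine (sq_le_sq₀ (norm_nonneg _) (norm_nonneg _)).1 ?_
  rw [PiLp.norm_sq_eq_of_L2, PiLp.norm_sq_eq_of_L2]
  calc ∑ r, ‖mix A V r‖ ^ 2 ≤ ∑ r, ∑ q, A r q * ‖V q‖ ^ 2 := by
        refine Finset.sum_le_sum fun r _ => ?_
        have h1 : ‖mix A V r‖ ≤ ∑ q, A r q * ‖V q‖ := by
          rw [mix_apply]
          refine (norm_sum_le _ _).trans (le_of_eq ?_)
          refine Finset.sum_congr rfl fun q _ => ?_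
          rw [norm_smul, Real.norm_of_nonneg (hA r q)]
        exact (pow_le_pow_left₀ (norm_nonneg _) h1 2).trans
          (Real.pow_arith_mean_le_arith_mean_pow _ _ _ (fun q _ => hA r q) (hrow r)
            (fun q _ => norm_nonneg _) 2)
    _ = ∑ q, ‖V q‖ ^ 2 := by
        rw [Finset.sum_comm]
        refine Finset.sum_congr rfl fun q _ => ?_
        rw [← Finset.sum_mul, hcol, one_mul]

lemma norm_mix_avg_le (hR : 0 < R) (V : Stack R d) : ‖mix (avgMat R) V‖ ≤ ‖V‖ := by
  have hR' : (R : ℝ) ≠ 0 := by positivity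
  refine norm_mix_le _ (fun r q => ?_) (fun r => ?_) (fun q => ?_) V
  · simp [avgMat]
  · simp [avgMat, hR']
  · simp [avgMat, hR']

/-- `J⊥` is nonexpansive: `‖V − JV‖² = ‖V‖² − ‖JV‖²`. -/
lemma norm_sub_avg_le (hR : 0 < R) (V : Stack R d) : ‖V - mix (avgMat R) V‖ ≤ ‖V‖ := by
  have hR' : (R : ℝ) ≠ 0 := by positivity
  have hinner : ⟪V, mix (avgMat R) V⟫ = ‖mix (avgMat R) V‖ ^ 2 := by
    rw [← real_inner_self_eq_norm_sq, PiLp.inner_apply, PiLp.inner_apply]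
    simp only [mix_avg_apply]
    rw [← sum_inner, Finset.sum_const, Finset.card_univ, Fintype.card_fin,
      ← Nat.cast_smul_eq_nsmul ℝ, inner_smul_left, inner_smul_right, conj_trivial,
      smul_eq_mul, mul_inv_cancel_left₀ hR']
  refine (sq_le_sq₀ (norm_nonneg _) (norm_nonneg _)).1 ?_
  rw [norm_sub_sq_real, hinner]
  nlinarith [sq_nonneg ‖mix (avgMat R) V‖]

lemma norm_const_stack (v : EuclideanSpace ℝ (Fin d)) :
    ‖(WithLp.toLp 2 fun _ => v : Stack R d)‖ = √R * ‖v‖ := by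
  refine (sq_eq_sq₀ (norm_nonneg _) (by positivity)).1 ?_
  rw [PiLp.norm_sq_eq_of_L2, mul_pow, Real.sq_sqrt (Nat.cast_nonneg R)]
  simp

/-- A block-diagonal operator whose blocks have norm at most `L` has norm at most `L`. -/
lemma norm_blockDiag_le {L : ℝ} (hL : 0 ≤ L)
    (Hop : Fin R → (EuclideanSpace ℝ (Fin d) →L[ℝ] EuclideanSpace ℝ (Fin d)))
    (hHL : ∀ r, ‖Hop r‖ ≤ L) (V : Stack R d) :
    ‖(WithLp.toLp 2 fun r => Hop r (V r) : Stack R d)‖ ≤ L * ‖V‖ := by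
  refine (sq_le_sq₀ (norm_nonneg _) (by positivity)).1 ?_
  rw [mul_pow, PiLp.norm_sq_eq_of_L2, PiLp.norm_sq_eq_of_L2, Finset.mul_sum]
  refine Finset.sum_le_sum fun r _ => ?_
  rw [← mul_pow]
  exact pow_le_pow_left₀ (norm_nonneg _) ((Hop r).le_of_opNorm_le (hHL r) _) 2

/-- Column sums one: mixing preserves the sum over agents. -/
lemma sum_mix (A : Matrix (Fin R) (Fin R) ℝ) (hcol : ∀ q, ∑ r, A r q = 1)
    (V : Fin R → EuclideanSpace ℝ (Fin d)) :
    ∑ r, ∑ q, A r q • V q = ∑ q, V q := by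
  rw [Finset.sum_comm]
  refine Finset.sum_congr rfl fun q _ => ?_
  rw [← Finset.sum_smul, hcol, one_smul]

end Mix

/-- **Tracking error recursion**: for every block index `i ≥ 1` and every
`k ∈ 𝓘_i = {iτ, …, (i+1)τ−1}`, the tracking disagreement satisfies
`‖𝒯^k‖ ≤ ε_τ ‖𝒯^{(i−1)τ}‖ + β₁ Σ‖𝒞^j‖ + β₂ Σ‖𝒯^j‖ + β₃ Σ‖s^j‖`, with
`β₁ = L c_W + μL²`, `β₂ = μL`, `β₃ = μ√R L²`, where `c_W` bounds the operator
norm of `(𝒲^j − I)` restricted to the range of `J⊥` and `c_W ≤ 2`. -/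
theorem gt_diffusion_tracking_recursion
    (R d τ : ℕ) (hR : 0 < R) (hd : 0 < d) (hτ : 0 < τ)
    (L m : ℝ) (hm : 0 < m) (hmL : m ≤ L)
    -- quadratic local losses via symmetric PSD Hessians H_r with ‖H_r‖ ≤ L
    (Hop : Fin R → (EuclideanSpace ℝ (Fin d) →L[ℝ] EuclideanSpace ℝ (Fin d)))
    (hHsym : ∀ r u v, ⟪Hop r u, v⟫ = ⟪u, Hop r v⟫)
    (hHpsd : ∀ r u, 0 ≤ ⟪Hop r u, u⟫)
    (hHL : ∀ r, ‖Hop r‖ ≤ L)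
    (b : Fin R → EuclideanSpace ℝ (Fin d))
    (Hbar : EuclideanSpace ℝ (Fin d) →L[ℝ] EuclideanSpace ℝ (Fin d))
    (hHbar : Hbar = (R : ℝ)⁻¹ • ∑ r, Hop r)
    (hstrong : ∀ u, m * ‖u‖ ^ 2 ≤ ⟪Hbar u, u⟫)
    (bbar : EuclideanSpace ℝ (Fin d)) (hbbar : bbar = (R : ℝ)⁻¹ • ∑ r, b r)
    (zstar : EuclideanSpace ℝ (Fin d)) (hzstar : Hbar zstar + bbar = 0)
    -- doubly stochastic mixing matrices with block contraction ε_τ < 1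
    (W : Fin τ → Matrix (Fin R) (Fin R) ℝ)
    (hWnonneg : ∀ l r q, 0 ≤ W l r q)
    (hWrow : ∀ l r, ∑ q, W l r q = 1)
    (hWcol : ∀ l q, ∑ r, W l r q = 1)
    (P : ℕ → Matrix (Fin R) (Fin R) ℝ)
    (hP0 : P 0 = 1)
    (hPsucc : ∀ (l : ℕ) (hl : l < τ), P (l+1) = W ⟨l, hl⟩ * P l)
    (ε : ℝ) (hε1 : ε < 1)
    (hcontr : ‖Matrix.toEuclideanCLM (𝕜 := ℝ)
        (P τ - Matrix.of fun _ _ : Fin R => (R : ℝ)⁻¹)‖ = ε)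
    -- c_W bounds the operator norm of (𝒲^l − I) on the range of J⊥, and c_W ≤ 2
    (cW : ℝ) (hcW2 : cW ≤ 2)
    (hcW : ∀ (l : Fin τ) (V Vmix : PiLp 2 fun _ : Fin R => EuclideanSpace ℝ (Fin d)),
        (∑ r, V r = 0) →
        (∀ r, Vmix r = (∑ q, W l r q • V q) - V r) →
        ‖Vmix‖ ≤ cW * ‖V‖)
    (μ : ℝ) (hμ : 0 < μ)
    -- the gradient-tracking diffusion recursion
    (Z G : ℕ → Fin R → EuclideanSpace ℝ (Fin d))
    (hZ : ∀ (k : ℕ) (r : Fin R), Z (k+1) r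
        = ∑ q, W ⟨k % τ, Nat.mod_lt k hτ⟩ r q • (Z k q - μ • G k q))
    (hG : ∀ (k : ℕ) (r : Fin R), G (k+1) r
        = (∑ q, W ⟨k % τ, Nat.mod_lt k hτ⟩ r q • G k q)
          + (Hop r (Z (k+1) r) + b r) - (Hop r (Z k r) + b r))
    (hG0 : ∀ r, G 0 r = Hop r (Z 0 r) + b r)
    -- 𝒞^k = J⊥ Z^k, 𝒯^k = J⊥ G^k, s^k = z̄^k − z*
    (C T : ℕ → PiLp 2 fun _ : Fin R => EuclideanSpace ℝ (Fin d))
    (hC : ∀ (k : ℕ) (r : Fin R), C k r = Z k r - (R : ℝ)⁻¹ • ∑ q, Z k q)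
    (hT : ∀ (k : ℕ) (r : Fin R), T k r = G k r - (R : ℝ)⁻¹ • ∑ q, G k q)
    (s : ℕ → EuclideanSpace ℝ (Fin d))
    (hs : ∀ k, s k = ((R : ℝ)⁻¹ • ∑ r, Z k r) - zstar) :
    ∀ i k : ℕ, 1 ≤ i → i * τ ≤ k → k < (i + 1) * τ →
      ‖T k‖ ≤ ε * ‖T ((i - 1) * τ)‖
        + (L * cW + μ * L ^ 2) * ∑ j ∈ Finset.Ico ((i - 1) * τ) k, ‖C j‖
        + (μ * L) * ∑ j ∈ Finset.Ico ((i - 1) * τ) k, ‖T j‖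
        + (μ * Real.sqrt R * L ^ 2) * ∑ j ∈ Finset.Ico ((i - 1) * τ) k, ‖s j‖ := by
  have hL : 0 ≤ L := hm.le.trans hmL
  have hR' : (R : ℝ) ≠ 0 := by positivity
  set w : ℕ → Fin τ := fun k => ⟨k % τ, Nat.mod_lt k hτ⟩ with hw
  have hmixle : ∀ (l : Fin τ) (V : Stack R d), ‖mix (W l) V‖ ≤ ‖V‖ := fun l V =>
    norm_mix_le _ (hWnonneg l) (hWrow l) (hWcol l) V
  -- stacked gradient increment `Δ^j`
  let D : ℕ → Stack R d := fun j => WithLp.toLp 2 fun r => Hop r (Z (j+1) r - Z j r)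
  have hDr : ∀ j r, D j r = Hop r (Z (j+1) r - Z j r) := fun _ _ => rfl
  have hG' : ∀ j r, G (j+1) r = (∑ q, W (w j) r q • G j q) + D j r := by
    intro j r
    rw [hG, hDr, map_sub]
    abel
  have hsumT : ∀ j, ∑ r, T j r = 0 := by
    intro j
    simp only [hT, Finset.sum_sub_distrib, Finset.sum_const, Finset.card_univ, Fintype.card_fin,
      ← Nat.cast_smul_eq_nsmul ℝ, smul_smul, mul_inv_cancel₀ hR', one_smul, sub_self]
  have hsumC : ∀ j, ∑ r, C j r = 0 := by
    intro j
    simp only [hC, Finset.sum_sub_distrib, Finset.sum_const, Finset.card_univ, Fintype.card_fin,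
      ← Nat.cast_smul_eq_nsmul ℝ, smul_smul, mul_inv_cancel₀ hR', one_smul, sub_self]
  -- projected tracking update
  have hTsucc : ∀ j, T (j+1) = mix (W (w j)) (T j) + (D j - mix (avgMat R) (D j)) := by
    intro j
    ext1 r
    rw [PiLp.add_apply, PiLp.sub_apply, mix_avg_apply]
    simp only [mix_apply, hT, hG',
      Finset.sum_add_distrib, sum_mix _ (hWcol (w j)), smul_sub, Finset.sum_sub_distrib,
      ← Finset.sum_smul, hWrow, one_smul, smul_add]
    abel
  have hsumG : ∀ j, ∑ r, G j r = ∑ r, (Hop r (Z j r) + b r) := by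
    intro j
    induction j with
    | zero => exact Finset.sum_congr rfl fun r _ => hG0 r
    | succ j ih =>
      simp only [hG', hDr, map_sub, Finset.sum_add_distrib, Finset.sum_sub_distrib,
        sum_mix _ (hWcol (w j))] at ih ⊢
      rw [ih]
      abel
  -- average tracker: consensus part plus optimality part
  have hmeanG : ∀ j, (R : ℝ)⁻¹ • ∑ r, G j r
      = (R : ℝ)⁻¹ • ∑ r, Hop r (C j r) + Hbar (s j) := by
    intro j
    have hz : Hbar zstar = -((R : ℝ)⁻¹ • ∑ r, b r) := by
      rw [← hbbar]
      exact eq_neg_of_add_eq_zero_left hzstar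
    rw [hsumG, hs, map_sub, hz, hHbar]
    simp only [hC, map_sub, Finset.sum_add_distrib, Finset.sum_sub_distrib, smul_add, smul_sub,
      _root_.smul_apply, _root_.sum_apply]
    abel
  have hHbarL : ‖Hbar‖ ≤ L := by
    rw [hHbar, norm_smul, norm_inv, Real.norm_natCast]
    have h1 : ‖∑ r, Hop r‖ ≤ R * L := by
      refine (norm_sum_le_of_le _ fun r _ => hHL r).trans ?_
      simp
    calc (R : ℝ)⁻¹ * ‖∑ r, Hop r‖ ≤ (R : ℝ)⁻¹ * (R * L) := by gcongr
      _ = L := by field_simp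
  let M : ℕ → Stack R d := fun j => WithLp.toLp 2 fun _ => (R : ℝ)⁻¹ • ∑ r, G j r
  have hM : ∀ j, ‖M j‖ ≤ L * ‖C j‖ + √R * (L * ‖s j‖) := by
    intro j
    have hdec : M j = mix (avgMat R) (WithLp.toLp 2 fun r => Hop r (C j r))
        + (WithLp.toLp 2 fun _ => Hbar (s j)) := by
      ext1 r
      rw [PiLp.add_apply, mix_avg_apply]
      exact hmeanG j
    rw [hdec]
    refine (norm_add_le _ _).trans (add_le_add ?_ ?_)
    · exact (norm_mix_avg_le hR _).trans (norm_blockDiag_le hL Hop hHL (C j))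
    · rw [norm_const_stack]
      gcongr
      exact Hbar.le_of_opNorm_le hHbarL _
  let δ : ℕ → ℝ := fun j =>
    (L * cW + μ * L ^ 2) * ‖C j‖ + (μ * L) * ‖T j‖ + (μ * √R * L ^ 2) * ‖s j‖
  have delta_bound : ∀ j, ‖D j‖ ≤ δ j := by
    intro j
    let X : Stack R d := WithLp.toLp 2 fun r => Z (j+1) r - Z j r
    have hDX : ‖D j‖ ≤ L * ‖X‖ := norm_blockDiag_le hL Hop hHL X
    have hX : X = (mix (W (w j)) (C j) - C j) - μ • (mix (W (w j)) (T j) + M j) := by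
      ext1 r
      have hMr : M j r = (R : ℝ)⁻¹ • ∑ r, G j r := rfl
      have hXr : X r = Z (j+1) r - Z j r := rfl
      have hZj : Z (j+1) r = ∑ q, W (w j) r q • (Z j q - μ • G j q) := hZ j r
      have hswap : ∑ q, W (w j) r q • μ • G j q = μ • ∑ q, W (w j) r q • G j q := by
        rw [Finset.smul_sum]
        exact Finset.sum_congr rfl fun q _ => smul_comm _ _ _
      simp only [PiLp.add_apply, PiLp.sub_apply, PiLp.smul_apply, mix_apply, hMr, hXr, hZj, hC, hT,
        smul_sub, Finset.sum_sub_distrib, ← Finset.sum_smul, hWrow, one_smul, smul_add, hswap]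
      abel
    have hXle : ‖X‖ ≤ cW * ‖C j‖ + μ * (‖T j‖ + (L * ‖C j‖ + √R * (L * ‖s j‖))) := by
      rw [hX]
      refine (norm_sub_le _ _).trans (add_le_add ?_ ?_)
      · exact hcW (w j) (C j) _ (hsumC j) fun r => rfl
      · rw [norm_smul, Real.norm_of_nonneg hμ.le]
        gcongr
        exact (norm_add_le _ _).trans (add_le_add (hmixle _ _) (hM j))
    calc ‖D j‖ ≤ L * ‖X‖ := hDX
      _ ≤ L * (cW * ‖C j‖ + μ * (‖T j‖ + (L * ‖C j‖ + √R * (L * ‖s j‖)))) := by gcongr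
      _ = δ j := by simp only [δ]; ring
  have hproj : ∀ j, ‖D j - mix (avgMat R) (D j)‖ ≤ δ j := fun j =>
    (norm_sub_avg_le hR _).trans (delta_bound j)
  intro i k hi hik _
  obtain ⟨n, rfl⟩ : ∃ n, i = n + 1 := ⟨i - 1, by omega⟩
  rw [Nat.add_sub_cancel]
  -- drift from the pure mixing orbit within the first block
  have hblock : ∀ l, l ≤ τ → ‖T (n * τ + l) - mix (P l) (T (n * τ))‖
      ≤ ∑ j ∈ Finset.Ico (n * τ) (n * τ + l), δ j := by
    intro l
    induction l with
    | zero => intro _; simp [hP0, mix_one]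
    | succ l ih =>
      intro hl
      have hwl : w (n * τ + l) = ⟨l, hl⟩ := by
        simp only [hw, Fin.mk.injEq]
        rw [Nat.mul_add_mod_self_right, Nat.mod_eq_of_lt hl]
      rw [← add_assoc, Finset.sum_Ico_succ_top (by omega), hTsucc, hwl, hPsucc l hl, mix_mul,
        add_sub_right_comm, ← mix_sub]
      exact (norm_add_le _ _).trans
        (add_le_add ((hmixle _ _).trans (ih (by omega))) (hproj _))
  have hPτ : ‖mix (P τ) (T (n * τ))‖ ≤ ε * ‖T (n * τ)‖ := by
    have h0 : mix (avgMat R) (T (n * τ)) = 0 := by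
      ext1 r
      rw [mix_avg_apply, hsumT, smul_zero]
      rfl
    have h1 : mix (P τ) (T (n * τ)) = mix (P τ - avgMat R) (T (n * τ)) := by
      rw [mix_sub_mat, h0, sub_zero]
    rw [h1, ← hcontr]
    exact norm_mix_le_opNorm _ _
  have hmain : ‖T k‖ ≤ ε * ‖T (n * τ)‖ + ∑ j ∈ Finset.Ico (n * τ) k, δ j := by
    induction k, hik using Nat.le_induction with
    | base =>
      rw [add_one_mul]
      have h := hblock τ le_rfl
      have h' := norm_le_norm_add_norm_sub (mix (P τ) (T (n * τ))) (T (n * τ + τ))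
      rw [norm_sub_rev] at h'
      linarith
    | succ k hk ih =>
      have hk' : n * τ ≤ k := le_trans (Nat.mul_le_mul_right τ (Nat.le_succ n)) hk
      rw [Finset.sum_Ico_succ_top hk', hTsucc]
      have h1 := norm_add_le (mix (W (w k)) (T k)) (D k - mix (avgMat R) (D k))
      have h2 := hmixle (w k) (T k)
      have h3 := hproj k
      have h4 := ih (by omega)
      linarith
  refine hmain.trans (le_of_eq ?_)
  simp only [δ, Finset.sum_add_distrib, ← Finset.mul_sum]
  ring
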